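/- Let T > 0 and let f : ℝ² → ℂ be smooth and 2π-periodic in its second variable, with ∂̄f := ½(∂₁f + i·∂₂f) satisfying the pointwise bound |∂̄f(t,θ)| ≤ (1/10)·(|∂₁f(t,θ)|² + |∂₂f(t,θ)|²)^{1/2} for all (t,θ) with |t| ≤ T. Define the energy E(t) := ½·∫_{−t}^{t} ∫_0^{2π} (|∂₁f|² + |∂₂f|²) dθ dτ for t ∈ [0,T]. Then E is differentiable on (0,T) with (2/3)·E(t) ≤ E′(t) for every t ∈ (0,T), and consequently E(t) ≤ e^{−(2/3)(T−t)}·E(T) for every t ∈ [0,T]. (This is the analytic core of the paper's Lemma 5.2 on exponential decay of the energy of almost-holomorphic maps along the neck of the degenerating cylinder.) -/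

import Mathlib

open Real intervalIntegral

/-!
Let `ω` be the standard symplectic form. Where `∂̄f` is small, `f` is almost conformal: the energy
density is almost `2 f^*ω`, and `∂₂f` carries about half of it. Since `ω` has the primitive
`½ ω(z, dz)`, Stokes' theorem turns the energy of the cylinder into the symplectic actions of its
two boundary loops. The isoperimetric inequality bounds the action of a loop by the integral of
`‖∂₂f‖²`, hence by the energy of the boundary slices, which is the derivative of the energy of the
cylinder. The isoperimetric inequality itself reduces, after translating the loop to start at the
origin, to Wirtinger's inequality for functions vanishing at both endpoints. With
`‖∂̄f‖ ≤ ε ‖df‖` this yields the rate `(1 - 4ε²) / (1 + 2√2 ε)`, which is about `0.748` for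
`ε = 1/10`.
-/

section Wirtinger

variable {E : Type*} [NormedAddCommGroup E] [InnerProductSpace ℝ E] {a b : ℝ}

lemma hasDerivAt_neg_mul_tan {k m x : ℝ} (hx : cos (k * (x - m)) ≠ 0) :
    HasDerivAt (fun y ↦ -k * tan (k * (y - m))) (-k ^ 2 - (-k * tan (k * (x - m))) ^ 2) x := by
  have affine_deriv : HasDerivAt (fun y : ℝ ↦ k * (y - m)) (k * 1) x :=
    ((hasDerivAt_id x).sub_const m).const_mul k
  refine (((hasDerivAt_tan hx).comp x affine_deriv).const_mul (-k)).congr_deriv ?_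
  rw [one_div, ← inv_one_add_tan_sq hx, inv_inv]
  ring

lemma hasDerivAt_mul_norm_sq_of_riccati {φ : ℝ → ℝ} {w : ℝ → E} {w' : E} {k x : ℝ}
    (hφ : HasDerivAt φ (-k ^ 2 - φ x ^ 2) x) (hw : HasDerivAt w w' x) :
    HasDerivAt (fun y ↦ φ y * ‖w y‖ ^ 2)
      (‖w'‖ ^ 2 - k ^ 2 * ‖w x‖ ^ 2 - ‖w' - φ x • w x‖ ^ 2) x := by
  refine (hφ.mul hw.norm_sq).congr_deriv ?_
  rw [norm_sub_sq_real, inner_smul_right, norm_smul, mul_pow, norm_eq_abs, sq_abs,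
    real_inner_comm]
  ring

lemma sq_mul_integral_norm_sq_le_of_mul_lt_pi {w w' : ℝ → E} {k : ℝ} (hab : a ≤ b) (hk : 0 ≤ k)
    (hkπ : k * (b - a) < π) (hw : ∀ x ∈ Set.Icc a b, HasDerivAt w (w' x) x)
    (hw' : ContinuousOn w' (Set.Icc a b)) (ha : w a = 0) (hb : w b = 0) :
    k ^ 2 * ∫ x in a..b, ‖w x‖ ^ 2 ≤ ∫ x in a..b, ‖w' x‖ ^ 2 := by
  -- `φ` solves the Riccati equation `φ' = -k² - φ²`, which completes the square below.
  set φ : ℝ → ℝ := fun x ↦ -k * tan (k * (x - (a + b) / 2))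
  rw [← Set.uIcc_of_le hab] at hw hw'
  have hφ : ∀ x ∈ Set.uIcc a b, HasDerivAt φ (-k ^ 2 - φ x ^ 2) x := by
    intro x hx
    rw [Set.uIcc_of_le hab] at hx
    refine hasDerivAt_neg_mul_tan (cos_pos_of_mem_Ioo ⟨?_, ?_⟩).ne' <;>
      nlinarith [mul_le_mul_of_nonneg_left hx.1 hk, mul_le_mul_of_nonneg_left hx.2 hk]
  have hφ_cont : ContinuousOn φ (Set.uIcc a b) := HasDerivAt.continuousOn hφ
  have hw_cont : ContinuousOn w (Set.uIcc a b) := HasDerivAt.continuousOn hw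
  have int_w' : IntervalIntegrable (fun x ↦ ‖w' x‖ ^ 2) MeasureTheory.volume a b :=
    (hw'.norm.pow 2).intervalIntegrable
  have int_w : IntervalIntegrable (fun x ↦ k ^ 2 * ‖w x‖ ^ 2) MeasureTheory.volume a b :=
    ((hw_cont.norm.pow 2).const_mul _).intervalIntegrable
  have int_sq : IntervalIntegrable (fun x ↦ ‖w' x - φ x • w x‖ ^ 2) MeasureTheory.volume a b :=
    ((hw'.sub (hφ_cont.smul hw_cont)).norm.pow 2).intervalIntegrable
  have integral_identity := integral_eq_sub_of_hasDerivAt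
    (fun x hx ↦ hasDerivAt_mul_norm_sq_of_riccati (hφ x hx) (hw x hx))
    ((int_w'.sub int_w).sub int_sq)
  rw [integral_sub (int_w'.sub int_w) int_sq, integral_sub int_w' int_w, integral_const_mul,
    ha, hb] at integral_identity
  have remainder_nonneg : 0 ≤ ∫ x in a..b, ‖w' x - φ x • w x‖ ^ 2 :=
    integral_nonneg hab fun x _ ↦ by positivity
  simp only [norm_zero, ne_eq, OfNat.ofNat_ne_zero, not_false_eq_true, zero_pow, mul_zero,
    sub_zero] at integral_identity
  linarith

theorem wirtinger_inequality {w w' : ℝ → E} (hab : a ≤ b)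
    (hw : ∀ x ∈ Set.Icc a b, HasDerivAt w (w' x) x) (hw' : ContinuousOn w' (Set.Icc a b))
    (ha : w a = 0) (hb : w b = 0) :
    π ^ 2 * ∫ x in a..b, ‖w x‖ ^ 2 ≤ (b - a) ^ 2 * ∫ x in a..b, ‖w' x‖ ^ 2 := by
  rcases hab.eq_or_lt with rfl | hlt
  · simp
  have hba : 0 < b - a := sub_pos.2 hlt
  have below_pi : ∀ s ∈ Set.Ioo 0 π,
      s ^ 2 * ∫ x in a..b, ‖w x‖ ^ 2 ≤ (b - a) ^ 2 * ∫ x in a..b, ‖w' x‖ ^ 2 := by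
    rintro s ⟨hs, hsπ⟩
    have h := sq_mul_integral_norm_sq_le_of_mul_lt_pi (k := s / (b - a)) hab (by positivity)
      (by rwa [div_mul_cancel₀ _ hba.ne']) hw hw' ha hb
    rwa [div_pow, div_mul_eq_mul_div, div_le_iff₀' (by positivity)] at h
  refine le_of_tendsto (f := fun s : ℝ ↦ s ^ 2 * ∫ x in a..b, ‖w x‖ ^ 2)
    (x := nhdsWithin π (Set.Iio π)) ?_ ?_
  · exact ((continuous_id.pow 2).mul_const _).continuousWithinAt
  · filter_upwards [Ioo_mem_nhdsLT pi_pos] using below_pi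

end Wirtinger

section SymplecticForm

variable {F : Type*} [NormedAddCommGroup F] [InnerProductSpace ℝ F] (J : F →ₗᵢ[ℝ] F)

/-- The symplectic form `ω(u, v) = ⟪Ju, v⟫` determined by the metric and a compatible complex
structure `J`, encoded as a linear isometry; the condition `J² = -1` is a hypothesis of the lemmas
that depend on it. On `ℂ` with `J = i` it is `u.re * v.im - u.im * v.re`. -/
noncomputable def symplecticForm (u v : F) : ℝ := inner ℝ (J u) v

lemma abs_symplecticForm_le (u v : F) : |symplecticForm J u v| ≤ ‖u‖ * ‖v‖ := by
  simpa [symplecticForm] using abs_real_inner_le_norm (J u) v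

lemma symplecticForm_sub_left (u₁ u₂ v : F) :
    symplecticForm J (u₁ - u₂) v = symplecticForm J u₁ v - symplecticForm J u₂ v := by
  simp [symplecticForm, inner_sub_left]

lemma symplecticForm_zero_right (u : F) : symplecticForm J u 0 = 0 := by
  simp [symplecticForm]

variable {J} in
lemma symplecticForm_swap (hJ : ∀ v, J (J v) = -v) (u v : F) :
    symplecticForm J v u = -symplecticForm J u v := by
  rw [symplecticForm, ← J.inner_map_map, hJ, inner_neg_left, real_inner_comm, symplecticForm]

variable {J} in
lemma norm_add_map_sq (hJ : ∀ v, J (J v) = -v) (u v : F) :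
    ‖u + J v‖ ^ 2 = ‖u‖ ^ 2 + ‖v‖ ^ 2 - 2 * symplecticForm J u v := by
  have h : inner ℝ u (J v) = -symplecticForm J u v := by
    rw [← symplecticForm_swap hJ, real_inner_comm, symplecticForm]
  rw [norm_add_sq_real, J.norm_map, h]
  ring

@[fun_prop]
lemma continuous_symplecticForm {X : Type*} [TopologicalSpace X] {u v : X → F}
    (hu : Continuous u) (hv : Continuous v) : Continuous fun x ↦ symplecticForm J (u x) (v x) :=
  (J.continuous.comp hu).inner hv

lemma contDiff_symplecticForm {E : Type*} [NormedAddCommGroup E] [NormedSpace ℝ E] {n : ℕ∞}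
    {u v : E → F} (hu : ContDiff ℝ n u) (hv : ContDiff ℝ n v) :
    ContDiff ℝ n fun x ↦ symplecticForm J (u x) (v x) :=
  (J.contDiff.comp hu).inner ℝ hv

lemma fderiv_symplecticForm_apply {E : Type*} [NormedAddCommGroup E] [NormedSpace ℝ E]
    {u v : E → F} {x : E} (hu : DifferentiableAt ℝ u x) (hv : DifferentiableAt ℝ v x) (y : E) :
    fderiv ℝ (fun x ↦ symplecticForm J (u x) (v x)) x y =
      symplecticForm J (u x) (fderiv ℝ v x y) + symplecticForm J (fderiv ℝ u x y) (v x) := by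
  have hJu : HasFDerivAt (fun x ↦ J (u x)) (J.toContinuousLinearMap.comp (fderiv ℝ u x)) x :=
    J.toContinuousLinearMap.hasFDerivAt.comp x hu.hasFDerivAt
  have h := fderiv_inner_apply ℝ hJu.differentiableAt hv y
  rwa [hJu.fderiv] at h

lemma integral_symplecticForm_const_left {a b : ℝ} {u u' : ℝ → F} (c : F)
    (hu : ∀ x, HasDerivAt u (u' x) x) (hu' : Continuous u') :
    ∫ x in a..b, symplecticForm J c (u' x) = symplecticForm J c (u b - u a) := by
  have h : ∀ x, HasDerivAt (fun x ↦ symplecticForm J c (u x)) (symplecticForm J c (u' x)) x :=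
    fun x ↦ by simpa [symplecticForm] using (hasDerivAt_const x (J c)).inner ℝ (hu x)
  rw [integral_eq_sub_of_hasDerivAt (fun x _ ↦ h x)
    (Continuous.intervalIntegrable (by fun_prop) a b)]
  simp [symplecticForm, inner_sub_right]

lemma integral_symplecticForm_sub_const_left {a b : ℝ} {u u' : ℝ → F} (c : F)
    (hu : ∀ x, HasDerivAt u (u' x) x) (hu' : Continuous u') (closed : u a = u b) :
    ∫ x in a..b, symplecticForm J (u x - c) (u' x) =
      ∫ x in a..b, symplecticForm J (u x) (u' x) := by
  have hu_cont : Continuous u := continuous_iff_continuousAt.2 fun x ↦ (hu x).continuousAt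
  simp only [symplecticForm_sub_left]
  rw [integral_sub (Continuous.intervalIntegrable (by fun_prop) _ _)
      (Continuous.intervalIntegrable (by fun_prop) _ _),
    integral_symplecticForm_const_left J c hu hu', closed, sub_self, symplecticForm_zero_right,
    sub_zero]

lemma two_mul_abs_symplecticForm_le (u v : F) {r s : ℝ} (hr : 0 ≤ r) (hs : 0 ≤ s) :
    2 * (r * s) * |symplecticForm J u v| ≤ r ^ 2 * ‖u‖ ^ 2 + s ^ 2 * ‖v‖ ^ 2 :=
  calc 2 * (r * s) * |symplecticForm J u v| ≤ 2 * (r * s) * (‖u‖ * ‖v‖) := by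
        gcongr
        exact abs_symplecticForm_le J u v
    _ = 2 * (r * ‖u‖) * (s * ‖v‖) := by ring
    _ ≤ (r * ‖u‖) ^ 2 + (s * ‖v‖) ^ 2 := two_mul_le_add_sq _ _
    _ = r ^ 2 * ‖u‖ ^ 2 + s ^ 2 * ‖v‖ ^ 2 := by ring

theorem isoperimetric_inequality {a b : ℝ} {u u' : ℝ → F} (hab : a ≤ b)
    (hu : ∀ x, HasDerivAt u (u' x) x) (hu' : Continuous u') (closed : u a = u b) :
    |∫ x in a..b, symplecticForm J (u x) (u' x)| ≤ (b - a) / π * ∫ x in a..b, ‖u' x‖ ^ 2 := by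
  rcases hab.eq_or_lt with rfl | hlt
  · simp
  have hba : 0 < b - a := sub_pos.2 hlt
  have hu_cont : Continuous u := continuous_iff_continuousAt.2 fun x ↦ (hu x).continuousAt
  have integrable {g : ℝ → ℝ} (hg : Continuous g) :
      IntervalIntegrable g MeasureTheory.volume a b := hg.intervalIntegrable a b
  set w : ℝ → F := fun x ↦ u x - u a with hw
  have wirtinger : π ^ 2 * ∫ x in a..b, ‖w x‖ ^ 2 ≤ (b - a) ^ 2 * ∫ x in a..b, ‖u' x‖ ^ 2 :=
    wirtinger_inequality hab (fun x _ ↦ (hu x).sub_const _) hu'.continuousOn (sub_self _)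
      (by simp [hw, closed])
  have am_gm : 2 * (π * (b - a)) * ∫ x in a..b, |symplecticForm J (w x) (u' x)| ≤
      π ^ 2 * (∫ x in a..b, ‖w x‖ ^ 2) + (b - a) ^ 2 * ∫ x in a..b, ‖u' x‖ ^ 2 := by
    rw [← integral_const_mul, ← integral_const_mul, ← integral_const_mul,
      ← integral_add (integrable (by fun_prop)) (integrable (by fun_prop))]
    exact integral_mono_on hab (integrable (by fun_prop)) (integrable (by fun_prop)) fun x _ ↦
      two_mul_abs_symplecticForm_le J (w x) (u' x) pi_pos.le hba.le
  rw [← integral_symplecticForm_sub_const_left J (u a) hu hu' closed, div_mul_eq_mul_div,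
    le_div_iff₀' pi_pos]
  calc π * |∫ x in a..b, symplecticForm J (w x) (u' x)|
      ≤ π * ∫ x in a..b, |symplecticForm J (w x) (u' x)| := by
        gcongr
        exact abs_integral_le_integral_abs hab
    _ ≤ (b - a) * ∫ x in a..b, ‖u' x‖ ^ 2 :=
        le_of_mul_le_mul_left (by linarith) (mul_pos two_pos hba)

end SymplecticForm

section AlmostHolomorphic

variable {F : Type*} [NormedAddCommGroup F] [InnerProductSpace ℝ F] {J : F →ₗᵢ[ℝ] F}

lemma mul_norm_sq_add_norm_sq_le_two_mul_symplecticForm {u v : F} {ε : ℝ} (hJ : ∀ v, J (J v) = -v)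
    (h : ‖(1 / 2 : ℝ) • (u + J v)‖ ≤ ε * √(‖u‖ ^ 2 + ‖v‖ ^ 2)) :
    (1 - 4 * ε ^ 2) * (‖u‖ ^ 2 + ‖v‖ ^ 2) ≤ 2 * symplecticForm J u v := by
  have h_sq : ‖(1 / 2 : ℝ) • (u + J v)‖ ^ 2 ≤ ε ^ 2 * (‖u‖ ^ 2 + ‖v‖ ^ 2) := by
    calc ‖(1 / 2 : ℝ) • (u + J v)‖ ^ 2 ≤ (ε * √(‖u‖ ^ 2 + ‖v‖ ^ 2)) ^ 2 := by gcongr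
      _ = ε ^ 2 * (‖u‖ ^ 2 + ‖v‖ ^ 2) := by rw [mul_pow, sq_sqrt (by positivity)]
  rw [norm_smul, norm_of_nonneg one_half_pos.le, mul_pow, norm_add_map_sq hJ] at h_sq
  linarith

lemma two_mul_norm_sq_le {u v : F} {ε : ℝ} (hε : 0 ≤ ε)
    (h : ‖(1 / 2 : ℝ) • (u + J v)‖ ≤ ε * √(‖u‖ ^ 2 + ‖v‖ ^ 2)) :
    2 * ‖v‖ ^ 2 ≤ (1 + 2 * √2 * ε) * (‖u‖ ^ 2 + ‖v‖ ^ 2) := by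
  set s := √(‖u‖ ^ 2 + ‖v‖ ^ 2) with hs
  have s_sq : s ^ 2 = ‖u‖ ^ 2 + ‖v‖ ^ 2 := sq_sqrt (by positivity)
  have norm_diff_le : ‖v‖ - ‖u‖ ≤ 2 * ε * s := by
    have triangle : ‖v‖ ≤ ‖u + J v‖ + ‖u‖ := by
      simpa using norm_sub_le (u + J v) u
    rw [norm_smul, norm_of_nonneg one_half_pos.le] at h
    linarith
  have norm_sum_le : ‖u‖ + ‖v‖ ≤ √2 * s := by
    rw [hs, ← sqrt_mul (by positivity)]
    exact le_sqrt_of_sq_le add_sq_le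
  calc 2 * ‖v‖ ^ 2 = s ^ 2 + (‖v‖ - ‖u‖) * (‖u‖ + ‖v‖) := by rw [s_sq]; ring
    _ ≤ s ^ 2 + 2 * ε * s * (√2 * s) := by gcongr
    _ = (1 + 2 * √2 * ε) * (‖u‖ ^ 2 + ‖v‖ ^ 2) := by rw [← s_sq]; ring

end AlmostHolomorphic

section Stokes

variable {F : Type*} [NormedAddCommGroup F] [InnerProductSpace ℝ F] {J : F →ₗᵢ[ℝ] F}

lemma fderiv_symplecticForm_fderiv_sub {E : Type*} [NormedAddCommGroup E] [NormedSpace ℝ E]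
    {f : E → F} (hJ : ∀ v, J (J v) = -v) (hf : ContDiff ℝ 2 f) (x v w : E) :
    fderiv ℝ (fun y ↦ symplecticForm J (f y) (fderiv ℝ f y w)) x v -
        fderiv ℝ (fun y ↦ symplecticForm J (f y) (fderiv ℝ f y v)) x w =
      2 * symplecticForm J (fderiv ℝ f x v) (fderiv ℝ f x w) := by
  have hf_diff : Differentiable ℝ f := hf.differentiable two_ne_zero
  have hdf : Differentiable ℝ (fderiv ℝ f) :=
    (hf.fderiv_right (m := 1) (by norm_num)).differentiable one_ne_zero
  have second_deriv : ∀ y z, fderiv ℝ (fun p ↦ fderiv ℝ f p y) x z =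
      fderiv ℝ (fderiv ℝ f) x z y := fun y z ↦ by
    simp [fderiv_clm_apply (hdf x) (differentiableAt_const y)]
  have symm : fderiv ℝ (fderiv ℝ f) x v w = fderiv ℝ (fderiv ℝ f) x w v :=
    hf.contDiffAt.isSymmSndFDerivAt (by simp) v w
  rw [fderiv_symplecticForm_apply J (hf_diff x) (by fun_prop),
    fderiv_symplecticForm_apply J (hf_diff x) (by fun_prop), second_deriv, second_deriv, symm,
    symplecticForm_swap hJ (fderiv ℝ f x v)]
  ring

variable {f : ℝ × ℝ → F}

lemma hasDerivAt_slice_fst (hf : Differentiable ℝ f) (t θ : ℝ) :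
    HasDerivAt (fun τ ↦ f (τ, θ)) (fderiv ℝ f (t, θ) (1, 0)) t :=
  (hf (t, θ)).hasFDerivAt.comp_hasDerivAt t ((hasDerivAt_id t).prodMk (hasDerivAt_const t θ))

lemma hasDerivAt_slice_snd (hf : Differentiable ℝ f) (t θ : ℝ) :
    HasDerivAt (fun η ↦ f (t, η)) (fderiv ℝ f (t, θ) (0, 1)) θ :=
  (hf (t, θ)).hasFDerivAt.comp_hasDerivAt θ ((hasDerivAt_const θ t).prodMk (hasDerivAt_id θ))

theorem two_mul_integral_symplecticForm_fderiv {a b c d : ℝ} (hJ : ∀ v, J (J v) = -v)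
    (hf : ContDiff ℝ 2 f) (hper : ∀ t, f (t, d) = f (t, c)) :
    2 * ∫ t in a..b, ∫ θ in c..d,
        symplecticForm J (fderiv ℝ f (t, θ) (1, 0)) (fderiv ℝ f (t, θ) (0, 1)) =
      (∫ θ in c..d, symplecticForm J (f (b, θ)) (fderiv ℝ f (b, θ) (0, 1))) -
        ∫ θ in c..d, symplecticForm J (f (a, θ)) (fderiv ℝ f (a, θ) (0, 1)) := by
  set P : ℝ × ℝ → ℝ × ℝ → ℝ := fun v z ↦ symplecticForm J (f z) (fderiv ℝ f z v) with hP
  have hdf : ContDiff ℝ 1 (fderiv ℝ f) := hf.fderiv_right (by norm_num)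
  have hf_diff : Differentiable ℝ f := hf.differentiable two_ne_zero
  have P_contDiff : ∀ v, ContDiff ℝ 1 (P v) := fun v ↦
    contDiff_symplecticForm J (hf.of_le (by norm_num)) (hdf.clm_apply contDiff_const)
  have P_hasFDerivAt : ∀ v z, HasFDerivAt (P v) (fderiv ℝ (P v) z) z := fun v z ↦
    ((P_contDiff v).differentiable one_ne_zero z).hasFDerivAt
  have P_fst_per : ∀ t, P (1, 0) (t, d) = P (1, 0) (t, c) := fun t ↦ by
    have fderiv_per : fderiv ℝ f (t, d) (1, 0) = fderiv ℝ f (t, c) (1, 0) :=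
      (hasDerivAt_slice_fst hf_diff t d).unique
        (by simpa only [hper] using hasDerivAt_slice_fst hf_diff t c)
    simp only [hP, hper, fderiv_per]
  have divergence : ∀ z, fderiv ℝ (P (0, 1)) z (1, 0) + (-fderiv ℝ (P (1, 0)) z) (0, 1) =
      2 * symplecticForm J (fderiv ℝ f z (1, 0)) (fderiv ℝ f z (0, 1)) := fun z ↦ by
    rw [← fderiv_symplecticForm_fderiv_sub hJ hf, neg_apply, sub_eq_add_neg]
  have stokes := MeasureTheory.integral2_divergence_prod_of_hasFDerivAt
    (P (0, 1)) (fun z ↦ -P (1, 0) z) (fderiv ℝ (P (0, 1))) (fun z ↦ -fderiv ℝ (P (1, 0)) z) a c b d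
    (P_contDiff _).continuous.continuousOn (P_contDiff _).continuous.neg.continuousOn
    (fun z _ ↦ P_hasFDerivAt _ z) (fun z _ ↦ (P_hasFDerivAt _ z).neg)
    (by
      simp only [divergence]
      have hdf_cont := hdf.continuous
      exact (Continuous.continuousOn (by fun_prop)).integrableOn_compact
        (isCompact_uIcc.prod isCompact_uIcc))
  simpa only [divergence, integral_const_mul, P_fst_per, sub_self, zero_add] using stokes

end Stokes

section Monotonicity

lemma hasDerivAt_integral_neg_self {E : Type*} [NormedAddCommGroup E] [NormedSpace ℝ E]
    [CompleteSpace E] {g : ℝ → E} (hg : Continuous g) (t : ℝ) :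
    HasDerivAt (fun t ↦ ∫ τ in (-t)..t, g τ) (g t + g (-t)) t := by
  have primitive_deriv : ∀ s, HasDerivAt (fun s ↦ ∫ τ in (0 : ℝ)..s, g τ) (g s) s := fun s ↦
    integral_hasDerivAt_right (hg.intervalIntegrable _ _)
      hg.aestronglyMeasurable.stronglyMeasurableAtFilter hg.continuousAt
  have split : (fun t ↦ ∫ τ in (-t)..t, g τ) =
      fun t ↦ (∫ τ in (0 : ℝ)..t, g τ) - ∫ τ in (0 : ℝ)..(-t), g τ := funext fun t ↦
    (integral_interval_sub_left (hg.intervalIntegrable _ _) (hg.intervalIntegrable _ _)).symm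
  rw [split]
  refine ((primitive_deriv t).sub
    ((primitive_deriv (-t)).scomp t (hasDerivAt_neg t))).congr_deriv ?_
  rw [neg_one_smul, sub_neg_eq_add]

lemma le_exp_mul_of_mul_le_deriv {g : ℝ → ℝ} {a b c : ℝ} (hg : ContinuousOn g (Set.Icc a b))
    (hg' : ∀ t ∈ Set.Ioo a b, DifferentiableAt ℝ g t ∧ c * g t ≤ deriv g t) :
    ∀ t ∈ Set.Icc a b, g t ≤ exp (-c * (b - t)) * g b := by
  intro t ht
  set h : ℝ → ℝ := fun s ↦ exp (c * (b - s)) * g s with hh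
  have h_deriv : ∀ s ∈ Set.Ioo a b,
      HasDerivAt h (exp (c * (b - s)) * (deriv g s - c * g s)) s := fun s hs ↦ by
    have exp_deriv : HasDerivAt (fun s ↦ exp (c * (b - s))) (exp (c * (b - s)) * (c * -1)) s :=
      (((hasDerivAt_id s).const_sub b).const_mul c).exp
    exact (exp_deriv.mul (hg' s hs).1.hasDerivAt).congr_deriv (by ring)
  have h_mono : MonotoneOn h (Set.Icc a b) := by
    refine monotoneOn_of_deriv_nonneg (convex_Icc a b) (by fun_prop) ?_ ?_ <;>
      rw [interior_Icc] <;> intro s hs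
    · exact (h_deriv s hs).differentiableAt.differentiableWithinAt
    · rw [(h_deriv s hs).deriv]
      exact mul_nonneg (exp_pos _).le (sub_nonneg.2 (hg' s hs).2)
  have h_le : exp (c * (b - t)) * g t ≤ g b := by
    simpa [hh] using h_mono ht (Set.right_mem_Icc.2 (ht.1.trans ht.2)) ht.2
  calc g t = exp (-c * (b - t)) * (exp (c * (b - t)) * g t) := by
        rw [← mul_assoc, ← exp_add, neg_mul, neg_add_cancel, exp_zero, one_mul]
    _ ≤ exp (-c * (b - t)) * g b := by gcongr

end Monotonicity

section Energy

variable {F : Type*} [NormedAddCommGroup F] [InnerProductSpace ℝ F]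

/-- The energy density `|df|² = |∂₁f|² + |∂₂f|²`. -/
noncomputable def energyDensity (f : ℝ × ℝ → F) (z : ℝ × ℝ) : ℝ :=
  ‖fderiv ℝ f z (1, 0)‖ ^ 2 + ‖fderiv ℝ f z (0, 1)‖ ^ 2

/-- The operator `∂̄f = ½(∂₁f + J ∂₂f)` measuring how far `f` is from being `J`-holomorphic. -/
noncomputable def dbar (J : F →ₗᵢ[ℝ] F) (f : ℝ × ℝ → F) (z : ℝ × ℝ) : F :=
  (1 / 2 : ℝ) • (fderiv ℝ f z (1, 0) + J (fderiv ℝ f z (0, 1)))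

/-- The integral of `|df|²` over the circle `{τ} × [0, 2π]`, without the factor `½`. -/
noncomputable def sliceEnergy (f : ℝ × ℝ → F) (τ : ℝ) : ℝ :=
  ∫ θ in (0 : ℝ)..(2 * π), energyDensity f (τ, θ)

/-- The energy of `f` on the cylinder `[-t, t] × [0, 2π]`, half the Dirichlet integral. -/
noncomputable def cylinderEnergy (f : ℝ × ℝ → F) (t : ℝ) : ℝ :=
  (1 / 2) * ∫ τ in (-t)..t, sliceEnergy f τ

variable {J : F →ₗᵢ[ℝ] F} {f : ℝ × ℝ → F}

lemma continuous_energyDensity (hf : ContDiff ℝ 1 f) : Continuous (energyDensity f) := by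
  have : Continuous (fderiv ℝ f) := hf.continuous_fderiv one_ne_zero
  unfold energyDensity
  fun_prop

lemma continuous_sliceEnergy (hf : ContDiff ℝ 1 f) : Continuous (sliceEnergy f) :=
  continuous_parametric_intervalIntegral_of_continuous' (f := fun τ θ ↦ energyDensity f (τ, θ))
    (continuous_energyDensity hf) 0 (2 * π)

lemma hasDerivAt_cylinderEnergy (hf : ContDiff ℝ 1 f) (t : ℝ) :
    HasDerivAt (cylinderEnergy f) ((1 / 2) * (sliceEnergy f t + sliceEnergy f (-t))) t :=
  (hasDerivAt_integral_neg_self (continuous_sliceEnergy hf) t).const_mul _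

lemma cylinderEnergy_nonneg {t : ℝ} (ht : 0 ≤ t) : 0 ≤ cylinderEnergy f t :=
  mul_nonneg (by norm_num) <| integral_nonneg (by linarith) fun _ _ ↦
    integral_nonneg two_pi_pos.le fun _ _ ↦ add_nonneg (sq_nonneg _) (sq_nonneg _)

lemma abs_integral_symplecticForm_slice_le {ε τ : ℝ} (hf : ContDiff ℝ 1 f)
    (hper : f (τ, 2 * π) = f (τ, 0)) (hε : 0 ≤ ε)
    (hdbar : ∀ θ, ‖dbar J f (τ, θ)‖ ≤ ε * √(energyDensity f (τ, θ))) :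
    |∫ θ in (0 : ℝ)..(2 * π), symplecticForm J (f (τ, θ)) (fderiv ℝ f (τ, θ) (0, 1))| ≤
      (1 + 2 * √2 * ε) * sliceEnergy f τ := by
  have : Continuous (fderiv ℝ f) := hf.continuous_fderiv one_ne_zero
  have hdens : Continuous (energyDensity f) := continuous_energyDensity hf
  calc _ ≤ (2 * π - 0) / π * ∫ θ in (0 : ℝ)..(2 * π), ‖fderiv ℝ f (τ, θ) (0, 1)‖ ^ 2 :=
        isoperimetric_inequality J two_pi_pos.le
          (hasDerivAt_slice_snd (hf.differentiable one_ne_zero) τ) (by fun_prop) hper.symm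
    _ = ∫ θ in (0 : ℝ)..(2 * π), 2 * ‖fderiv ℝ f (τ, θ) (0, 1)‖ ^ 2 := by
        rw [sub_zero, mul_div_cancel_right₀ _ pi_ne_zero, integral_const_mul]
    _ ≤ ∫ θ in (0 : ℝ)..(2 * π), (1 + 2 * √2 * ε) * energyDensity f (τ, θ) :=
        integral_mono_on two_pi_pos.le (Continuous.intervalIntegrable (by fun_prop) _ _)
          (Continuous.intervalIntegrable (by fun_prop) _ _)
          fun θ _ ↦ two_mul_norm_sq_le hε (hdbar θ)
    _ = (1 + 2 * √2 * ε) * sliceEnergy f τ := integral_const_mul _ _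

lemma mul_cylinderEnergy_le_integral_symplecticForm {ε t : ℝ} (hJ : ∀ v, J (J v) = -v)
    (hf : ContDiff ℝ 1 f) (ht : 0 ≤ t)
    (hdbar : ∀ τ θ, |τ| ≤ t → ‖dbar J f (τ, θ)‖ ≤ ε * √(energyDensity f (τ, θ))) :
    (1 - 4 * ε ^ 2) * cylinderEnergy f t ≤ ∫ τ in (-t)..t, ∫ θ in (0 : ℝ)..(2 * π),
      symplecticForm J (fderiv ℝ f (τ, θ) (1, 0)) (fderiv ℝ f (τ, θ) (0, 1)) := by
  have : Continuous (fderiv ℝ f) := hf.continuous_fderiv one_ne_zero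
  have hdens : Continuous (energyDensity f) := continuous_energyDensity hf
  have hslice : Continuous (sliceEnergy f) := continuous_sliceEnergy hf
  have slice_le : ∀ τ, |τ| ≤ t → (1 - 4 * ε ^ 2) / 2 * sliceEnergy f τ ≤
      ∫ θ in (0 : ℝ)..(2 * π),
        symplecticForm J (fderiv ℝ f (τ, θ) (1, 0)) (fderiv ℝ f (τ, θ) (0, 1)) := by
    intro τ hτ
    rw [sliceEnergy, ← integral_const_mul]
    refine integral_mono_on two_pi_pos.le (Continuous.intervalIntegrable (by fun_prop) _ _)
      (Continuous.intervalIntegrable (by fun_prop) _ _) fun θ _ ↦ ?_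
    have h := mul_norm_sq_add_norm_sq_le_two_mul_symplecticForm hJ (hdbar τ θ hτ)
    rw [energyDensity]
    linarith
  calc (1 - 4 * ε ^ 2) * cylinderEnergy f t
      = ∫ τ in (-t)..t, (1 - 4 * ε ^ 2) / 2 * sliceEnergy f τ := by
        rw [cylinderEnergy, integral_const_mul]
        ring
    _ ≤ _ := by
        refine integral_mono_on (by linarith) (Continuous.intervalIntegrable (by fun_prop) _ _)
          (Continuous.intervalIntegrable ?_ _ _) fun τ hτ ↦ slice_le τ (abs_le.2 hτ)
        fun_prop

theorem mul_cylinderEnergy_le_mul_deriv {ε t : ℝ} (hJ : ∀ v, J (J v) = -v) (hf : ContDiff ℝ 2 f)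
    (hper : ∀ τ, f (τ, 2 * π) = f (τ, 0)) (hε : 0 ≤ ε) (ht : 0 ≤ t)
    (hdbar : ∀ τ θ, |τ| ≤ t → ‖dbar J f (τ, θ)‖ ≤ ε * √(energyDensity f (τ, θ))) :
    (1 - 4 * ε ^ 2) * cylinderEnergy f t ≤ (1 + 2 * √2 * ε) * deriv (cylinderEnergy f) t := by
  have hf₁ : ContDiff ℝ 1 f := hf.of_le (by norm_num)
  have bulk := mul_cylinderEnergy_le_integral_symplecticForm hJ hf₁ ht hdbar
  have stokes := two_mul_integral_symplecticForm_fderiv (a := -t) (b := t) hJ hf hper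
  have action_le : ∀ τ, |τ| = t →
      |∫ θ in (0 : ℝ)..(2 * π), symplecticForm J (f (τ, θ)) (fderiv ℝ f (τ, θ) (0, 1))| ≤
        (1 + 2 * √2 * ε) * sliceEnergy f τ := fun τ hτ ↦
    abs_integral_symplecticForm_slice_le hf₁ (hper τ) hε fun θ ↦ hdbar τ θ hτ.le
  have top_action := (abs_le.1 (action_le t (abs_of_nonneg ht))).2
  have bottom_action := (abs_le.1 (action_le (-t) (by rwa [abs_neg, abs_of_nonneg]))).1
  rw [(hasDerivAt_cylinderEnergy hf₁ t).deriv]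
  linarith

theorem energy_exponential_decay_general {ε c T : ℝ} (hJ : ∀ v, J (J v) = -v)
    (hf : ContDiff ℝ 2 f) (hper : ∀ t, f (t, 2 * π) = f (t, 0)) (hε : 0 ≤ ε)
    (hc : c * (1 + 2 * √2 * ε) ≤ 1 - 4 * ε ^ 2)
    (hdbar : ∀ t θ, |t| ≤ T → ‖dbar J f (t, θ)‖ ≤ ε * √(energyDensity f (t, θ))) :
    (∀ t ∈ Set.Ioo 0 T, DifferentiableAt ℝ (cylinderEnergy f) t ∧
        c * cylinderEnergy f t ≤ deriv (cylinderEnergy f) t) ∧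
      ∀ t ∈ Set.Icc 0 T, cylinderEnergy f t ≤ exp (-c * (T - t)) * cylinderEnergy f T := by
  have hdiff : Differentiable ℝ (cylinderEnergy f) := fun t ↦
    (hasDerivAt_cylinderEnergy (hf.of_le (by norm_num)) t).differentiableAt
  have ineq : ∀ t ∈ Set.Ioo 0 T, DifferentiableAt ℝ (cylinderEnergy f) t ∧
      c * cylinderEnergy f t ≤ deriv (cylinderEnergy f) t := by
    rintro t ⟨ht, htT⟩
    refine ⟨hdiff t, le_of_mul_le_mul_left ?_ (by positivity : 0 < 1 + 2 * √2 * ε)⟩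
    calc (1 + 2 * √2 * ε) * (c * cylinderEnergy f t)
        = c * (1 + 2 * √2 * ε) * cylinderEnergy f t := by ring
      _ ≤ (1 - 4 * ε ^ 2) * cylinderEnergy f t := by
          gcongr
          exact cylinderEnergy_nonneg ht.le
      _ ≤ (1 + 2 * √2 * ε) * deriv (cylinderEnergy f) t :=
          mul_cylinderEnergy_le_mul_deriv hJ hf hper hε ht.le
            fun τ θ hτ ↦ hdbar τ θ (hτ.trans htT.le)
  exact ⟨ineq, le_exp_mul_of_mul_le_deriv hdiff.continuous.continuousOn ineq⟩

end Energy

/-- Multiplication by `i`, the complex structure of `ℂ`. -/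
noncomputable def mulI : ℂ →ₗᵢ[ℝ] ℂ := ⟨LinearMap.mulLeft ℝ Complex.I, by simp⟩

lemma mulI_apply (z : ℂ) : mulI z = Complex.I * z := rfl

lemma mulI_mulI (z : ℂ) : mulI (mulI z) = -z := by simp [mulI_apply, ← mul_assoc]

lemma two_thirds_mul_le_one_sub :
    2 / 3 * (1 + 2 * √2 * (1 / 10)) ≤ 1 - 4 * (1 / 10 : ℝ) ^ 2 := by
  have sqrt_two_lt : √2 < 3 / 2 := (sqrt_lt' (by norm_num)).2 (by norm_num)
  linarith

/-- The analytic core of Lemma 5.2: if `f : ℝ² → ℂ` is smooth, `2π`-periodic in `θ`, and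
satisfies `|∂̄f| ≤ (1/10)·|df|` pointwise for `|t| ≤ T`, then the energy
`E(t) = ½ ∫_{−t}^{t} ∫_0^{2π} |df|² dθ dτ` satisfies the differential inequality
`(2/3)·E(t) ≤ E′(t)` on `(0,T)`, and consequently decays exponentially:
`E(t) ≤ e^{−(2/3)(T−t)}·E(T)` on `[0,T]`. -/
theorem energy_exponential_decay (T : ℝ) (hT : 0 < T) (f : ℝ × ℝ → ℂ)
    (hf : ContDiff ℝ (⊤ : ℕ∞) f)
    (hper : ∀ t θ : ℝ, f (t, θ + 2 * π) = f (t, θ))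
    (hdbar : ∀ t θ : ℝ, |t| ≤ T →
      ‖(1 / 2 : ℂ) * (fderiv ℝ f (t, θ) (1, 0) + Complex.I * fderiv ℝ f (t, θ) (0, 1))‖
        ≤ (1 / 10) * Real.sqrt (‖fderiv ℝ f (t, θ) (1, 0)‖ ^ 2
            + ‖fderiv ℝ f (t, θ) (0, 1)‖ ^ 2))
    (E : ℝ → ℝ)
    (hE : ∀ t : ℝ, E t = (1 / 2) * ∫ τ in (-t)..t, ∫ θ in (0:ℝ)..(2 * π),
      (‖fderiv ℝ f (τ, θ) (1, 0)‖ ^ 2 + ‖fderiv ℝ f (τ, θ) (0, 1)‖ ^ 2)) :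
    (∀ t ∈ Set.Ioo 0 T, DifferentiableAt ℝ E t ∧ (2 / 3) * E t ≤ deriv E t) ∧
      (∀ t ∈ Set.Icc 0 T, E t ≤ Real.exp (-(2 / 3) * (T - t)) * E T) := by
  obtain rfl : E = cylinderEnergy f := funext hE
  exact energy_exponential_decay_general mulI_mulI (contDiff_infty.1 hf 2)
    (fun t ↦ by simpa using hper t 0) (by norm_num) two_thirds_mul_le_one_sub fun t θ ht ↦ by
      simpa [dbar, energyDensity, mulI_apply, mul_add] using hdbar t θ ht
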